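/- arXiv:1208.5278 — 4 statements merged into one kernel-verified Lean document; each statement's English description precedes it below -/
import Mathlib

section
/- The q-deformed W(2,2) algebra (W_q, [·,·]_q, α) is a Hom-Lie algebra; that is, the bracket [·,·]_q is skew-symmetric ([x,y]_q = −[y,x]_q for all x, y ∈ W_q) and satisfies the Hom-Jacobi identity [[x,y]_q, α(z)]_q + [[y,z]_q, α(x)]_q + [[z,x]_q, α(y)]_q = 0 for all x, y, z ∈ W_q. -/
noncomputable section

/-- The underlying space of the q-deformed W(2,2) algebra: formal ℂ-linear
combinations of the basis `{L_n, M_n : n ∈ ℤ}`. -/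
abbrev Wq : Type := (ℤ →₀ ℂ) × (ℤ →₀ ℂ)

/-- The basis vector `L_n`. -/
def Lb (n : ℤ) : Wq := (Finsupp.single n 1, 0)

/-- The basis vector `M_n`. -/
def Mb (n : ℤ) : Wq := (0, Finsupp.single n 1)

/-- The q-number `[n]_q = (q^n - q^(-n))/(q - q⁻¹)`. -/
def qnum (q : ℂ) (n : ℤ) : ℂ := (q ^ n - q ^ (-n)) / (q - q⁻¹)

/-- `⟨n⟩_q = q^n + q^(-n)`. -/
def qang (q : ℂ) (n : ℤ) : ℂ := q ^ n + q ^ (-n)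

theorem Wq_neg_smul (c : ℂ) (x : Wq) : (-c) • x = -(c • x) := neg_smul c x

theorem Wq_add_smul (c d : ℂ) (x : Wq) : (c + d) • x = c • x + d • x := add_smul c d x

theorem Wq_induct (P : Wq → Prop) (hadd : ∀ x y, P x → P y → P (x + y))
    (hsmul : ∀ (c : ℂ) x, P x → P (c • x)) (hL : ∀ n, P (Lb n)) (hM : ∀ n, P (Mb n))
    (x : Wq) : P x := by
  have h0 : P 0 := by simpa using hsmul 0 _ (hL 0)
  obtain ⟨a, b⟩ := x
  have h1 : P (a, 0) := by
    induction a using Finsupp.induction_linear with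
    | zero => exact h0
    | add f g hf hg => simpa using hadd _ _ hf hg
    | single n c => simpa [Lb] using hsmul c _ (hL n)
  have h2 : P (0, b) := by
    induction b using Finsupp.induction_linear with
    | zero => exact h0
    | add f g hf hg => simpa using hadd _ _ hf hg
    | single n c => simpa [Mb] using hsmul c _ (hM n)
  simpa using hadd _ _ h1 h2

theorem qnum_anti (q : ℂ) (a b : ℤ) : qnum q (a - b) = - qnum q (b - a) := by
  have h1 : -(a - b) = b - a := by ring
  have h2 : -(b - a) = a - b := by ring
  simp only [qnum, h1, h2]
  ring

theorem qnum_jacobi (q : ℂ) (hq0 : q ≠ 0) (n m k : ℤ) :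
    qnum q (m - n) * (qang q k * qnum q (k - (m + n))) +
    qnum q (k - m) * (qang q n * qnum q (n - (k + m))) +
    qnum q (n - k) * (qang q m * qnum q (m - (n + k))) = 0 := by
  have hn : q ^ n ≠ 0 := zpow_ne_zero _ hq0
  have hm : q ^ m ≠ 0 := zpow_ne_zero _ hq0
  have hk : q ^ k ≠ 0 := zpow_ne_zero _ hq0
  simp only [qnum, qang, zpow_neg, zpow_sub₀ hq0, zpow_add₀ hq0]
  generalize (q - q⁻¹) = d
  generalize q ^ n = a at *
  generalize q ^ m = b at *
  generalize q ^ k = c at *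
  simp only [div_eq_mul_inv _ d]
  generalize d⁻¹ = e
  field_simp
  ring

/-- The q-deformed W(2,2) algebra `(W_q, [·,·]_q, α)` is a Hom-Lie algebra:
the bracket is skew-symmetric and satisfies the Hom-Jacobi identity. -/
theorem qW22_is_HomLie (q : ℂ) (hq0 : q ≠ 0)
    (hq1 : ∀ k : ℤ, 1 ≤ k → q ^ k ≠ 1)
    (br : Wq →ₗ[ℂ] Wq →ₗ[ℂ] Wq) (α : Wq →ₗ[ℂ] Wq)
    (hLL : ∀ n m : ℤ, br (Lb n) (Lb m) = qnum q (m - n) • Lb (m + n))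
    (hLM : ∀ n m : ℤ, br (Lb n) (Mb m) = qnum q (m - n) • Mb (m + n))
    (hML : ∀ m n : ℤ, br (Mb m) (Lb n) = qnum q (n - m) • Mb (m + n))
    (hMM : ∀ n m : ℤ, br (Mb n) (Mb m) = 0)
    (hαL : ∀ n : ℤ, α (Lb n) = qang q n • Lb n)
    (hαM : ∀ n : ℤ, α (Mb n) = qang q n • Mb n) :
    (∀ x y : Wq, br x y = - br y x) ∧
    (∀ x y z : Wq,
      br (br x y) (α z) + br (br y z) (α x) + br (br z x) (α y) = 0) := by
  have skew : ∀ x y : Wq, br x y = - br y x := by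
    intro x y
    induction x using Wq_induct with
    | hadd x xb h hb => simp only [map_add, LinearMap.add_apply, h, hb]; abel
    | hsmul c x h => simp only [map_smul, LinearMap.smul_apply, h, smul_neg]
    | hL n =>
      induction y using Wq_induct with
      | hadd x xb h hb => simp only [map_add, LinearMap.add_apply, h, hb]; abel
      | hsmul c x h => simp only [map_smul, LinearMap.smul_apply, h, smul_neg]
      | hL m => rw [hLL, hLL, qnum_anti, Wq_neg_smul, add_comm]
      | hM m => rw [hLM, hML, qnum_anti, Wq_neg_smul]
    | hM n =>
      induction y using Wq_induct with
      | hadd x xb h hb => simp only [map_add, LinearMap.add_apply, h, hb]; abel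
      | hsmul c x h => simp only [map_smul, LinearMap.smul_apply, h, smul_neg]
      | hL m => rw [hLM, hML, qnum_anti, Wq_neg_smul]
      | hM m => rw [hMM, hMM, neg_zero]
  refine ⟨skew, ?_⟩
  have hMLb : ∀ m n : ℤ, br (Mb m) (Lb n) = qnum q (n - m) • Mb (n + m) := by
    intro m n; rw [hML, add_comm]
  let J : Wq → Wq → Wq → Wq := fun x y z =>
    br (br x y) (α z) + br (br y z) (α x) + br (br z x) (α y)
  have cyc : ∀ x y z, J x y z = J y z x := by
    intro x y z; simp only [J]; abel
  have Jadd : ∀ x xb y z, J (x + xb) y z = J x y z + J xb y z := by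
    intro x xb y z; simp only [J, map_add, LinearMap.add_apply]; abel
  have Jsmul : ∀ (c : ℂ) x y z, J (c • x) y z = c • J x y z := by
    intro c x y z; simp only [J, map_smul, LinearMap.smul_apply, smul_add]
  have ext1 : ∀ y z, (∀ n, J (Lb n) y z = 0) → (∀ n, J (Mb n) y z = 0) →
      ∀ x, J x y z = 0 := by
    intro y z h1 h2 x
    refine Wq_induct (fun x => J x y z = 0) ?_ ?_ h1 h2 x
    · intro x xb h hb; rw [Jadd, h, hb, add_zero]
    · intro c x h; rw [Jsmul, h, smul_zero]
  have fin : ∀ (n m k : ℤ) (B : ℤ → Wq),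
      qnum q (m - n) • qang q k • qnum q (k - (m + n)) • B (k + (m + n)) +
      qnum q (k - m) • qang q n • qnum q (n - (k + m)) • B (n + (k + m)) +
      qnum q (n - k) • qang q m • qnum q (m - (n + k)) • B (m + (n + k)) = 0 := by
    intro n m k B
    have e1 : n + (k + m) = k + (m + n) := by ring
    have e2 : m + (n + k) = k + (m + n) := by ring
    rw [e1, e2]
    simp only [smul_smul, ← Wq_add_smul]
    have := qnum_jacobi q hq0 n m k
    simp only [← mul_assoc] at this ⊢
    rw [this, zero_smul]
  have finb : ∀ (n m k : ℤ) (B : ℤ → Wq),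
      qang q k • qnum q (m - n) • qnum q (k - (m + n)) • B (k + (m + n)) +
      qang q n • qnum q (k - m) • qnum q (n - (k + m)) • B (n + (k + m)) +
      qang q m • qnum q (n - k) • qnum q (m - (n + k)) • B (m + (n + k)) = 0 := by
    intro n m k B
    rw [smul_comm (qang q k), smul_comm (qang q n), smul_comm (qang q m)]
    exact fin n m k B
  have LLL : ∀ n m k, J (Lb n) (Lb m) (Lb k) = 0 := by
    intro n m k
    simp only [J, hLL, hαL, map_smul, LinearMap.smul_apply]
    first | exact fin n m k Lb | exact finb n m k Lb
  have MLL : ∀ n m k, J (Mb n) (Lb m) (Lb k) = 0 := by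
    intro n m k
    simp only [J, hLL, hLM, hMLb, hαL, hαM, map_smul, LinearMap.smul_apply]
    first | exact fin n m k Mb | exact finb n m k Mb
  have MML : ∀ n m k, J (Mb n) (Mb m) (Lb k) = 0 := by
    intro n m k
    simp [J, hLM, hMLb, hMM, hαL, hαM]
  have MMM : ∀ n m k, J (Mb n) (Mb m) (Mb k) = 0 := by
    intro n m k
    simp [J, hMM]
  intro x y z
  change J x y z = 0
  refine ext1 _ _ (fun n => ?_) (fun n => ?_) x
  · rw [cyc]
    refine ext1 _ _ (fun m => ?_) (fun m => ?_) y
    · rw [cyc]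
      refine ext1 _ _ (fun k => ?_) (fun k => ?_) z
      · exact LLL _ _ _
      · exact MLL _ _ _
    · rw [cyc]
      refine ext1 _ _ (fun k => ?_) (fun k => ?_) z
      · rw [← cyc]; exact MLL _ _ _
      · rw [cyc, cyc]; exact MML _ _ _
  · rw [cyc]
    refine ext1 _ _ (fun m => ?_) (fun m => ?_) y
    · rw [cyc]
      refine ext1 _ _ (fun k => ?_) (fun k => ?_) z
      · rw [cyc]; exact MLL _ _ _
      · exact MML _ _ _
    · rw [cyc]
      refine ext1 _ _ (fun k => ?_) (fun k => ?_) z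
      · rw [cyc]; exact MML _ _ _
      · exact MMM _ _ _
end
end

section
/- Let β and γ be the bilinear maps W_q × W_q → ℂ determined on basis elements by β(L_m, L_n) = δ_{m,−n}·([m−1]_q[m]_q[m+1]_q)/([2]_q[3]_q⟨m⟩_q), β(L_m, M_n) = β(M_m, L_n) = β(M_m, M_n) = 0, and γ(L_m, M_n) = δ_{m,−n}·([m−1]_q[m]_q[m+1]_q)/([2]_q[3]_q⟨m⟩_q), γ(M_m, L_n) = −δ_{m,−n}·([n−1]_q[n]_q[n+1]_q)/([2]_q[3]_q⟨n⟩_q), γ(L_m, L_n) = γ(M_m, M_n) = 0. Then β and γ are 2-cocycles on the Hom-Lie algebra (W_q, [·,·]_q, α): each is skew-symmetric and satisfies ψ(α(x),[y,z]_q) + ψ(α(y),[z,x]_q) + ψ(α(z),[x,y]_q) = 0 for all x,y,z ∈ W_q. -/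
noncomputable section

/-- The value `[m−1]_q[m]_q[m+1]_q / ([2]_q[3]_q⟨m⟩_q)` appearing in the
2-cocycles `β` and `γ`. -/
def cocyc (q : ℂ) (m : ℤ) : ℂ :=
  qnum q (m - 1) * qnum q m * qnum q (m + 1) / (qnum q 2 * qnum q 3 * qang q m)

theorem Wq_ind {P : Wq → Prop} (hadd : ∀ x y, P x → P y → P (x + y))
    (hsmul : ∀ (c : ℂ) x, P x → P (c • x)) (hL : ∀ n, P (Lb n)) (hM : ∀ n, P (Mb n))
    (x : Wq) : P x := by
  have h0 : P 0 := by simpa using hsmul 0 _ (hL 0)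
  have h1 : ∀ f : ℤ →₀ ℂ, P (f, 0) := by
    intro f
    induction f using Finsupp.induction_linear with
    | zero => exact h0
    | add f g hf hg => simpa using hadd _ _ hf hg
    | single n c => simpa [Lb] using hsmul c _ (hL n)
  have h2 : ∀ f : ℤ →₀ ℂ, P (0, f) := by
    intro f
    induction f using Finsupp.induction_linear with
    | zero => exact h0
    | add f g hf hg => simpa using hadd _ _ hf hg
    | single n c => simpa [Mb] using hsmul c _ (hM n)
  have := hadd _ _ (h1 x.1) (h2 x.2)
  simpa using this

theorem skew_of_basis (ψ : Wq →ₗ[ℂ] Wq →ₗ[ℂ] ℂ)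
    (hLL : ∀ m n, ψ (Lb m) (Lb n) = - ψ (Lb n) (Lb m))
    (hLM : ∀ m n, ψ (Lb m) (Mb n) = - ψ (Mb n) (Lb m))
    (hMM : ∀ m n, ψ (Mb m) (Mb n) = - ψ (Mb n) (Mb m)) (x y : Wq) :
    ψ x y = - ψ y x := by
  induction x using Wq_ind with
  | hadd a b ha hb => simp only [map_add, LinearMap.add_apply]; linear_combination ha + hb
  | hsmul c a ha =>
    simp only [map_smul, LinearMap.smul_apply, smul_eq_mul]; linear_combination c * ha
  | hL m =>
    induction y using Wq_ind with
    | hadd a b ha hb => simp only [map_add, LinearMap.add_apply]; linear_combination ha + hb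
    | hsmul c a ha =>
      simp only [map_smul, LinearMap.smul_apply, smul_eq_mul]; linear_combination c * ha
    | hL n => exact hLL m n
    | hM n => exact hLM m n
  | hM m =>
    induction y using Wq_ind with
    | hadd a b ha hb => simp only [map_add, LinearMap.add_apply]; linear_combination ha + hb
    | hsmul c a ha =>
      simp only [map_smul, LinearMap.smul_apply, smul_eq_mul]; linear_combination c * ha
    | hL n => rw [hLM n m, neg_neg]
    | hM n => exact hMM m n

/-- To check the cyclic identity it suffices to treat basis vectors. -/
theorem cyc_of_basis (ψ : Wq →ₗ[ℂ] Wq →ₗ[ℂ] ℂ) (br : Wq →ₗ[ℂ] Wq →ₗ[ℂ] Wq)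
    (α : Wq →ₗ[ℂ] Wq)
    (h : ∀ x y z, (∃ n, x = Lb n ∨ x = Mb n) → (∃ n, y = Lb n ∨ y = Mb n) →
      (∃ n, z = Lb n ∨ z = Mb n) →
      ψ (α x) (br y z) + ψ (α y) (br z x) + ψ (α z) (br x y) = 0) (x y z : Wq) :
    ψ (α x) (br y z) + ψ (α y) (br z x) + ψ (α z) (br x y) = 0 := by
  have h1 : ∀ x y z, (∃ n, x = Lb n ∨ x = Mb n) → (∃ n, y = Lb n ∨ y = Mb n) →
      ψ (α x) (br y z) + ψ (α y) (br z x) + ψ (α z) (br x y) = 0 := by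
    intro x y z hx hy
    induction z using Wq_ind with
    | hadd a b ha hb => simp only [map_add, LinearMap.add_apply]; linear_combination ha + hb
    | hsmul c a ha =>
      simp only [map_smul, LinearMap.smul_apply, smul_eq_mul]; linear_combination c * ha
    | hL n => exact h _ _ _ hx hy ⟨n, Or.inl rfl⟩
    | hM n => exact h _ _ _ hx hy ⟨n, Or.inr rfl⟩
  have h2 : ∀ x y z, (∃ n, x = Lb n ∨ x = Mb n) →
      ψ (α x) (br y z) + ψ (α y) (br z x) + ψ (α z) (br x y) = 0 := by
    intro x y z hx
    induction y using Wq_ind with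
    | hadd a b ha hb => simp only [map_add, LinearMap.add_apply]; linear_combination ha + hb
    | hsmul c a ha =>
      simp only [map_smul, LinearMap.smul_apply, smul_eq_mul]; linear_combination c * ha
    | hL n => exact h1 _ _ _ hx ⟨n, Or.inl rfl⟩
    | hM n => exact h1 _ _ _ hx ⟨n, Or.inr rfl⟩
  induction x using Wq_ind with
  | hadd a b ha hb => simp only [map_add, LinearMap.add_apply]; linear_combination ha + hb
  | hsmul c a ha =>
    simp only [map_smul, LinearMap.smul_apply, smul_eq_mul]; linear_combination c * ha
  | hL n => exact h2 _ _ _ ⟨n, Or.inl rfl⟩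
  | hM n => exact h2 _ _ _ ⟨n, Or.inr rfl⟩

theorem qnum_neg' (q : ℂ) (n : ℤ) : qnum q (-n) = - qnum q n := by
  simp only [qnum, neg_neg]; ring

theorem cocyc_neg (q : ℂ) (n : ℤ) : cocyc q (-n) = - cocyc q n := by
  have e1 : qnum q (-n - 1) = - qnum q (n + 1) := by rw [← qnum_neg']; congr 1; ring
  have e2 : qnum q (-n + 1) = - qnum q (n - 1) := by rw [← qnum_neg']; congr 1; ring
  have e3 : qang q (-n) = qang q n := by simp only [qang, neg_neg]; ring
  simp only [cocyc, e1, e2, e3, qnum_neg']; ring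

theorem qang_ne (q : ℂ) (hq0 : q ≠ 0) (hq1 : ∀ k : ℤ, 1 ≤ k → q ^ k ≠ 1) (n : ℤ) :
    qang q n ≠ 0 := by
  intro h
  have hx : q ^ n ≠ 0 := zpow_ne_zero _ hq0
  simp only [qang, zpow_neg] at h
  have h2 : q ^ n * q ^ n = -1 := by
    field_simp at h
    linear_combination h
  have h4 : q ^ (4 * n) = 1 := by
    have : q ^ (4 * n) = (q ^ n * q ^ n) * (q ^ n * q ^ n) := by
      rw [← zpow_add₀ hq0, ← zpow_add₀ hq0]; congr 1; ring
    rw [this, h2]; ring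
  rcases lt_trichotomy n 0 with hn | hn | hn
  · apply hq1 (-(4 * n)) (by omega)
    rw [zpow_neg, h4, inv_one]
  · subst hn; norm_num at h2
  · exact hq1 (4 * n) (by omega) h4

theorem qnum_mul (q : ℂ) (hq0 : q ≠ 0) (a b : ℤ) :
    qnum q (a + b) * qnum q (a - b) = qnum q a ^ 2 - qnum q b ^ 2 := by
  have ha : q ^ a ≠ 0 := zpow_ne_zero _ hq0
  have hb : q ^ b ≠ 0 := zpow_ne_zero _ hq0
  simp only [qnum, neg_add_rev, neg_sub, zpow_add₀ hq0, zpow_sub₀ hq0, zpow_neg]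
  rw [div_mul_div_comm, div_pow, div_pow, ← sub_div, ← sq]
  congr 1
  field_simp
  ring

theorem key (q : ℂ) (hq0 : q ≠ 0) (hq1 : ∀ k : ℤ, 1 ≤ k → q ^ k ≠ 1) (x y z : ℤ)
    (h : x + y + z = 0) :
    qang q x * (qnum q (z - y) * cocyc q x) + qang q y * (qnum q (x - z) * cocyc q y)
      + qang q z * (qnum q (y - x) * cocyc q z) = 0 := by
  have hd : ∀ n, qang q n * cocyc q n =
      (qnum q n ^ 2 - qnum q 1 ^ 2) * qnum q n * (qnum q 2 * qnum q 3)⁻¹ := by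
    intro n
    rw [← qnum_mul q hq0, cocyc, mul_inv]
    have := qang_ne q hq0 hq1 n
    rw [div_eq_mul_inv, mul_inv, mul_inv]
    field_simp
  have hm : ∀ x y z : ℤ, x + y + z = 0 →
      qnum q x * qnum q (z - y) = qnum q y ^ 2 - qnum q z ^ 2 := by
    intro x y z h
    have : x = -(z + y) := by omega
    rw [this, qnum_neg']
    linear_combination - qnum_mul q hq0 z y
  have a1 := hm x y z h
  have a2 := hm y z x (by omega)
  have a3 := hm z x y (by omega)
  have d1 := hd x
  have d2 := hd y
  have d3 := hd z
  generalize (qnum q 2 * qnum q 3)⁻¹ = c at *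
  linear_combination qnum q (z - y) * d1 + qnum q (x - z) * d2 + qnum q (y - x) * d3
    + c * (qnum q x ^ 2 - qnum q 1 ^ 2) * a1 + c * (qnum q y ^ 2 - qnum q 1 ^ 2) * a2
    + c * (qnum q z ^ 2 - qnum q 1 ^ 2) * a3

/-- The cyclic identity with the Kronecker deltas. -/
theorem key_if (q : ℂ) (hq0 : q ≠ 0) (hq1 : ∀ k : ℤ, 1 ≤ k → q ^ k ≠ 1) (x y z : ℤ) :
    qnum q (z - y) * (qang q x * if x + y + z = 0 then cocyc q x else 0)
      + qnum q (x - z) * (qang q y * if x + y + z = 0 then cocyc q y else 0)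
      + qnum q (y - x) * (qang q z * if x + y + z = 0 then cocyc q z else 0) = 0 := by
  split_ifs with h
  · linear_combination key q hq0 hq1 x y z h
  · simp

/-- The bilinear maps `β` and `γ` are 2-cocycles on the Hom-Lie algebra
`(W_q, [·,·]_q, α)`. -/
theorem beta_gamma_are_cocycles (q : ℂ) (hq0 : q ≠ 0)
    (hq1 : ∀ k : ℤ, 1 ≤ k → q ^ k ≠ 1)
    (br : Wq →ₗ[ℂ] Wq →ₗ[ℂ] Wq) (α : Wq →ₗ[ℂ] Wq)
    (hLL : ∀ n m : ℤ, br (Lb n) (Lb m) = qnum q (m - n) • Lb (m + n))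
    (hLM : ∀ n m : ℤ, br (Lb n) (Mb m) = qnum q (m - n) • Mb (m + n))
    (hML : ∀ m n : ℤ, br (Mb m) (Lb n) = qnum q (n - m) • Mb (m + n))
    (hMM : ∀ n m : ℤ, br (Mb n) (Mb m) = 0)
    (hαL : ∀ n : ℤ, α (Lb n) = qang q n • Lb n)
    (hαM : ∀ n : ℤ, α (Mb n) = qang q n • Mb n)
    (β γ : Wq →ₗ[ℂ] Wq →ₗ[ℂ] ℂ)
    (hβLL : ∀ m n : ℤ, β (Lb m) (Lb n) = if m = -n then cocyc q m else 0)
    (hβLM : ∀ m n : ℤ, β (Lb m) (Mb n) = 0)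
    (hβML : ∀ m n : ℤ, β (Mb m) (Lb n) = 0)
    (hβMM : ∀ m n : ℤ, β (Mb m) (Mb n) = 0)
    (hγLM : ∀ m n : ℤ, γ (Lb m) (Mb n) = if m = -n then cocyc q m else 0)
    (hγML : ∀ m n : ℤ, γ (Mb m) (Lb n) = if m = -n then -cocyc q n else 0)
    (hγLL : ∀ m n : ℤ, γ (Lb m) (Lb n) = 0)
    (hγMM : ∀ m n : ℤ, γ (Mb m) (Mb n) = 0) :
    (∀ x y : Wq, β x y = - β y x) ∧
    (∀ x y z : Wq,
      β (α x) (br y z) + β (α y) (br z x) + β (α z) (br x y) = 0) ∧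
    (∀ x y : Wq, γ x y = - γ y x) ∧
    (∀ x y z : Wq,
      γ (α x) (br y z) + γ (α y) (br z x) + γ (α z) (br x y) = 0) := by
  have hβ' : ∀ a x y : ℤ, β (Lb a) (Lb (x + y)) = if a + x + y = 0 then cocyc q a else 0 := by
    intro a x y
    rw [hβLL]
    exact if_congr (by omega) rfl rfl
  have hγ1 : ∀ a x y : ℤ, γ (Lb a) (Mb (x + y)) = if a + x + y = 0 then cocyc q a else 0 := by
    intro a x y
    rw [hγLM]
    exact if_congr (by omega) rfl rfl
  have hγ2 : ∀ a x y : ℤ, γ (Mb a) (Lb (x + y)) = if a + x + y = 0 then cocyc q a else 0 := by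
    intro a x y
    rw [hγML]
    by_cases h : a + x + y = 0
    · rw [if_pos (by omega), if_pos h, ← cocyc_neg]; congr 1; omega
    · rw [if_neg (by omega), if_neg h]
  refine ⟨?_, ?_, ?_, ?_⟩
  · apply skew_of_basis
    · intro m n
      rw [hβLL, hβLL]
      by_cases h : m = -n
      · rw [if_pos h, if_pos (by omega), h, cocyc_neg]
      · rw [if_neg h, if_neg (by omega), neg_zero]
    · intro m n; rw [hβLM, hβML, neg_zero]
    · intro m n; rw [hβMM, hβMM, neg_zero]
  · apply cyc_of_basis
    rintro _ _ _ ⟨x, rfl | rfl⟩ ⟨y, rfl | rfl⟩ ⟨z, rfl | rfl⟩ <;>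
    simp only [hLL, hLM, hML, hMM, hαL, hαM, map_smul, LinearMap.smul_apply, smul_eq_mul,
      hβ', hβLM, hβML, hβMM, map_zero, mul_zero, add_zero]
    have := key_if q hq0 hq1 x y z
    rwa [show x + z + y = x + y + z by ring, show y + x + z = x + y + z by ring,
      show z + y + x = x + y + z by ring]
  · apply skew_of_basis
    · intro m n; rw [hγLL, hγLL, neg_zero]
    · intro m n
      rw [hγLM, hγML]
      by_cases h : m = -n
      · rw [if_pos h, if_pos (by omega), neg_neg]
      · rw [if_neg h, if_neg (by omega), neg_zero]
    · intro m n; rw [hγMM, hγMM, neg_zero]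
  · apply cyc_of_basis
    rintro _ _ _ ⟨x, rfl | rfl⟩ ⟨y, rfl | rfl⟩ ⟨z, rfl | rfl⟩ <;>
    simp only [hLL, hLM, hML, hMM, hαL, hαM, map_smul, LinearMap.smul_apply, smul_eq_mul,
      hγ1, hγ2, hγLL, hγMM, map_zero, mul_zero, add_zero] <;>
    · have := key_if q hq0 hq1 x y z
      simpa only [show x + z + y = x + y + z by ring, show y + x + z = x + y + z by ring,
        show z + y + x = x + y + z by ring, show y + z + x = x + y + z by ring,
        show z + x + y = x + y + z by ring] using this
end
end

section
/- Let n be a nonzero integer, let W_q⁰ = span_ℂ{L₀, M₀} and W_qⁿ = span_ℂ{L_n, M_n} be the corresponding graded subspaces of the q-deformed W(2,2) algebra. Then every linear map D: W_q⁰ → W_qⁿ satisfying [x, D(y)]_q = [y, D(x)]_q for all x, y ∈ W_q⁰ (the derivation condition, since the bracket vanishes identically on W_q⁰) is inner: there exists v ∈ W_qⁿ with D(x) = [x, v]_q for all x ∈ W_q⁰. In other words, H¹(W_q⁰, W_qⁿ) = 0 for n ≠ 0. -/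
noncomputable section

/-- The graded subspace `W_qⁿ = span_ℂ{L_n, M_n}`. -/
def Wgr (n : ℤ) : Submodule ℂ Wq := Submodule.span ℂ {Lb n, Mb n}

/-- `H¹(W_q⁰, W_qⁿ) = 0` for `n ≠ 0`: every derivation from `W_q⁰` into the
adjoint module `W_qⁿ` is inner. -/
theorem H1_W0_Wn_eq_zero (q : ℂ) (hq0 : q ≠ 0)
    (hq1 : ∀ k : ℤ, 1 ≤ k → q ^ k ≠ 1)
    (br : Wq →ₗ[ℂ] Wq →ₗ[ℂ] Wq)
    (hLL : ∀ n m : ℤ, br (Lb n) (Lb m) = qnum q (m - n) • Lb (m + n))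
    (hLM : ∀ n m : ℤ, br (Lb n) (Mb m) = qnum q (m - n) • Mb (m + n))
    (hML : ∀ m n : ℤ, br (Mb m) (Lb n) = qnum q (n - m) • Mb (m + n))
    (hMM : ∀ n m : ℤ, br (Mb n) (Mb m) = 0)
    (n : ℤ) (hn : n ≠ 0)
    (D : ↥(Wgr 0) →ₗ[ℂ] Wq)
    (hDval : ∀ x : ↥(Wgr 0), D x ∈ Wgr n)
    (hDder : ∀ x y : ↥(Wgr 0), br (x : Wq) (D y) = br (y : Wq) (D x)) :
    ∃ v ∈ Wgr n, ∀ x : ↥(Wgr 0), D x = br (x : Wq) v := by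
  have hz : ∀ k : ℤ, k ≠ 0 → q ^ k ≠ 1 := by
    intro k hk h
    rcases lt_or_gt_of_ne hk with h1 | h1
    · refine hq1 (-k) (by omega) ?_
      rw [zpow_neg, h, inv_one]
    · exact hq1 k (by omega) h
  have hd : ∀ k : ℤ, k ≠ 0 → q ^ k - q ^ (-k) ≠ 0 := by
    intro k hk h
    refine hz (k + k) (by omega) ?_
    rw [zpow_add₀ hq0]
    nth_rewrite 2 [sub_eq_zero.mp h]
    rw [← zpow_add₀ hq0, add_neg_cancel, zpow_zero]
  have hc : qnum q n ≠ 0 := by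
    have h1 := hd 1 one_ne_zero
    rw [zpow_one, zpow_neg, zpow_one] at h1
    exact div_ne_zero (hd n hn) h1
  have hact : ∀ w ∈ Wgr n, br (Lb 0) w = qnum q n • w := by
    intro w hw
    obtain ⟨a, b, rfl⟩ := Submodule.mem_span_pair.mp hw
    rw [map_add, map_smul, map_smul, hLL, hLM, sub_zero, add_zero, smul_add,
      smul_comm a, smul_comm b]
  let l : ↥(Wgr 0) := ⟨Lb 0, Submodule.subset_span (by simp)⟩
  refine ⟨(qnum q n)⁻¹ • D l, (Wgr n).smul_mem _ (hDval l), fun x => ?_⟩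
  have h := hDder l x
  rw [hact _ (hDval x)] at h
  rw [map_smul, ← h, smul_smul, inv_mul_cancel₀ hc, one_smul]
end
end

section
/- Classification of degree-zero derivations of the q-deformed W(2,2) algebra: let D: W_q → W_q be a linear map preserving the grading, i.e. D(W_qⁿ) ⊆ W_qⁿ for every n ∈ ℤ. Then D satisfies the Leibniz rule D([x,y]_q) = [D(x), y]_q + [x, D(y)]_q for all x, y ∈ W_q if and only if there exist a, b, d ∈ ℂ such that D(L_n) = n·(a·L_n + b·M_n) and D(M_n) = (n·a + d)·M_n for all n ∈ ℤ. -/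
noncomputable section

theorem wq_lin_ext {V : Type*} [AddCommMonoid V] [Module ℂ V] (f g : Wq →ₗ[ℂ] V)
    (hL : ∀ n, f (Lb n) = g (Lb n)) (hM : ∀ n, f (Mb n) = g (Mb n)) : f = g := by
  apply LinearMap.prod_ext
  · apply Finsupp.lhom_ext'
    intro n
    apply LinearMap.ext_ring
    simpa [Lb] using hL n
  · apply Finsupp.lhom_ext'
    intro n
    apply LinearMap.ext_ring
    simpa [Mb] using hM n

theorem wq_coeff (n : ℤ) (a b c d : ℂ)
    (h : a • Lb n + b • Mb n = c • Lb n + d • Mb n) : a = c ∧ b = d := by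
  have h1 := congrArg (fun z : Wq => z.1 n) h
  have h2 := congrArg (fun z : Wq => z.2 n) h
  simp [Lb, Mb] at h1 h2
  exact ⟨h1, h2⟩

theorem qnum_ne (q : ℂ) (hq0 : q ≠ 0)
    (hq1 : ∀ k : ℤ, 1 ≤ k → q ^ k ≠ 1) (k : ℤ) (hk : k ≠ 0) : qnum q k ≠ 0 := by
  have key : ∀ k : ℤ, k ≠ 0 → q ^ k - q ^ (-k) ≠ 0 := by
    intro k hk h
    have h2 : q ^ (k + k) = 1 := by
      rw [zpow_add₀ hq0]
      nth_rewrite 1 [sub_eq_zero.mp h]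
      rw [← zpow_add₀ hq0]; simp
    rcases lt_or_gt_of_ne hk with h' | h'
    · apply hq1 (-(k + k)) (by omega)
      rw [zpow_neg, h2, inv_one]
    · exact hq1 (k + k) (by omega) h2
  unfold qnum
  apply div_ne_zero (key k hk)
  simpa using key 1 one_ne_zero

theorem quasi_additive (f : ℤ → ℂ) (h : ∀ n m : ℤ, n ≠ m → f (m + n) = f n + f m) (n : ℤ) :
    f n = n * f 1 := by
  have h0 : f 0 = 0 := by
    have := h 0 1 (by norm_num)
    simpa using this
  have hm1 : f (-1) = - f 1 := by
    have := h 1 (-1) (by norm_num)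
    norm_num [h0] at this
    linear_combination -this
  have h2 : f 2 = 2 * f 1 := by
    have := h 2 (-1) (by norm_num)
    norm_num [hm1] at this
    linear_combination -this
  have step : ∀ k : ℤ, f (k + 1) = f k + f 1 := by
    intro k
    by_cases hk : k = 1
    · subst hk; norm_num [h2]; ring
    · rw [h 1 k (Ne.symm hk)]; ring
  induction n using Int.induction_on with
  | zero => simp [h0]
  | succ i ih => rw [step, ih]; push_cast; ring
  | pred i ih =>
    have := step (-(i : ℤ) - 1)
    rw [sub_add_cancel, ih] at this
    push_cast at this ⊢
    linear_combination -this

/-- Classification of degree-zero derivations of the q-deformed W(2,2)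
algebra: a grading-preserving linear map `D` satisfies the Leibniz rule iff
there are `a, b, d ∈ ℂ` with `D(L_n) = n(aL_n + bM_n)`,
`D(M_n) = (na + d)M_n`. -/
theorem degree_zero_derivations_classification (q : ℂ) (hq0 : q ≠ 0)
    (hq1 : ∀ k : ℤ, 1 ≤ k → q ^ k ≠ 1)
    (br : Wq →ₗ[ℂ] Wq →ₗ[ℂ] Wq)
    (hLL : ∀ n m : ℤ, br (Lb n) (Lb m) = qnum q (m - n) • Lb (m + n))
    (hLM : ∀ n m : ℤ, br (Lb n) (Mb m) = qnum q (m - n) • Mb (m + n))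
    (hML : ∀ m n : ℤ, br (Mb m) (Lb n) = qnum q (n - m) • Mb (m + n))
    (hMM : ∀ n m : ℤ, br (Mb n) (Mb m) = 0)
    (D : Wq →ₗ[ℂ] Wq)
    (hDgr : ∀ (n : ℤ), ∀ x ∈ Wgr n, D x ∈ Wgr n) :
    (∀ x y : Wq, D (br x y) = br (D x) y + br x (D y)) ↔
      ∃ a b d : ℂ, ∀ n : ℤ,
        D (Lb n) = (n : ℂ) • (a • Lb n + b • Mb n) ∧
        D (Mb n) = ((n : ℂ) * a + d) • Mb n := by
  have hML' : ∀ n m : ℤ, br (Mb n) (Lb m) = qnum q (m - n) • Mb (m + n) := by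
    intro n m; rw [hML, add_comm]
  constructor
  · intro hD
    have hL : ∀ n, ∃ a b : ℂ, a • Lb n + b • Mb n = D (Lb n) := fun n =>
      Submodule.mem_span_pair.mp (hDgr n _ (Submodule.subset_span (by simp)))
    have hM : ∀ n, ∃ a b : ℂ, a • Lb n + b • Mb n = D (Mb n) := fun n =>
      Submodule.mem_span_pair.mp (hDgr n _ (Submodule.subset_span (by simp)))
    choose α β hαβ using hL
    choose γ δ hγδ using hM
    have cancel : ∀ n m : ℤ, n ≠ m → ∀ x y : ℂ,
        qnum q (m - n) * x = qnum q (m - n) * y → x = y := by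
      intro n m hnm x y h
      exact mul_left_cancel₀ (qnum_ne q hq0 hq1 _ (by omega)) h
    have eLL : ∀ n m : ℤ, n ≠ m → α (m + n) = α n + α m ∧ β (m + n) = β n + β m := by
      intro n m hnm
      have h := hD (Lb n) (Lb m)
      rw [hLL, map_smul, ← hαβ, ← hαβ, ← hαβ] at h
      simp only [map_add, map_smul, LinearMap.add_apply, LinearMap.smul_apply,
        hLL, hLM, hML'] at h
      obtain ⟨h1, h2⟩ := wq_coeff (m + n) (qnum q (m - n) * α (m + n))
        (qnum q (m - n) * β (m + n)) (qnum q (m - n) * (α n + α m))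
        (qnum q (m - n) * (β n + β m)) (by linear_combination (norm := module) h)
      exact ⟨cancel n m hnm _ _ h1, cancel n m hnm _ _ h2⟩
    have eLM : ∀ n m : ℤ, n ≠ m → δ (m + n) = α n + δ m := by
      intro n m hnm
      have h := hD (Lb n) (Mb m)
      rw [hLM, map_smul, ← hαβ, ← hγδ, ← hγδ] at h
      simp only [map_add, map_smul, LinearMap.add_apply, LinearMap.smul_apply,
        hLL, hLM, hML', hMM] at h
      obtain ⟨h1, h2⟩ := wq_coeff (m + n) (qnum q (m - n) * γ (m + n))
        (qnum q (m - n) * δ (m + n)) (qnum q (m - n) * γ m)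
        (qnum q (m - n) * (α n + δ m)) (by linear_combination (norm := module) h)
      exact cancel n m hnm _ _ h2
    have eMM : ∀ n m : ℤ, n ≠ m → γ n + γ m = 0 := by
      intro n m hnm
      have h := hD (Mb n) (Mb m)
      rw [hMM, map_zero, ← hγδ, ← hγδ] at h
      simp only [map_add, map_smul, LinearMap.add_apply, LinearMap.smul_apply,
        hLL, hLM, hML', hMM] at h
      obtain ⟨h1, h2⟩ := wq_coeff (m + n) 0 (qnum q (m - n) * 0) 0
        (qnum q (m - n) * (γ n + γ m)) (by linear_combination (norm := module) h)
      exact (cancel n m hnm _ _ h2).symm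
    have hγ : ∀ n, γ n = 0 := by
      intro n
      have h1 := eMM n (n + 1) (by omega)
      have h2 := eMM n (n + 2) (by omega)
      have h3 := eMM (n + 1) (n + 2) (by omega)
      linear_combination (h1 + h2 - h3) / 2
    have hα := quasi_additive α (fun n m h => (eLL n m h).1)
    have hβ := quasi_additive β (fun n m h => (eLL n m h).2)
    refine ⟨α 1, β 1, δ 0, fun n => ⟨?_, ?_⟩⟩
    · rw [← hαβ, hα n, hβ n]; module
    · have : δ n = n * α 1 + δ 0 := by
        by_cases hn : n = 0
        · subst hn; simp
        · have := eLM n 0 hn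
          rw [zero_add] at this
          rw [this, hα n]
      rw [← hγδ, hγ, this]; module
  · rintro ⟨a, b, d, h⟩
    have hL := fun n => (h n).1
    have hM := fun n => (h n).2
    have key : br.compr₂ D = br.comp D + br.compl₂ D := by
      apply wq_lin_ext <;> intro n <;> apply wq_lin_ext <;> intro m <;>
      · simp only [LinearMap.compr₂_apply, LinearMap.add_apply, LinearMap.comp_apply,
          LinearMap.compl₂_apply, hLL, hLM, hML', hMM, map_smul, map_add, hL, hM,
          LinearMap.smul_apply, map_zero, Int.cast_add]
        module
    intro x y
    have := LinearMap.congr_fun (LinearMap.congr_fun key x) y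
    simpa using this
end
end
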